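/- There is a sequence of cut-free Lε-proofs of end-sequents S_i such that: (1) the size of S_i is polynomial in i; (2) each S_i is the epsilon translation of a first-order sequent S'_i containing weak quantifiers only; (3) the size of these cut-free Lε-proofs is polynomially bounded in i; and (4) there is no elementary function of i bounding the size of the smallest cut-free LK⁺-proofs or cut-free LK⁺⁺-proofs of S'_i. Hence cut-free Lε-proofs give a non-elementary speed-up even over cut-free LK⁺- and LK⁺⁺-proofs. -/

import Mathlib

namespace EpsCalc

/-! ## Syntax: terms and formulas of first-order logic extended by epsilon terms.
We use a locally nameless representation: `bvar` are de Bruijn indices for bound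
variables (bound by `all`, `ex`, or `eps`), `fvar` are named free variables. -/

mutual
inductive Tm : Type where
  | bvar : ℕ → Tm
  | fvar : ℕ → Tm
  | func : ℕ → Tms → Tm
  | eps  : Fm → Tm          -- the epsilon term ε_x A(x)

inductive Tms : Type where
  | nil  : Tms
  | cons : Tm → Tms → Tms

inductive Fm : Type where
  | atom : ℕ → Tms → Fm
  | and  : Fm → Fm → Fm
  | or   : Fm → Fm → Fm
  | imp  : Fm → Fm → Fm
  | not  : Fm → Fm
  | all  : Fm → Fm          -- ∀ binding de Bruijn index 0
  | ex   : Fm → Fm          -- ∃ binding de Bruijn index 0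
end

/-! lifting of bound variables (shift indices ≥ k by one) -/
mutual
def liftT (k : ℕ) : Tm → Tm
  | .bvar n => if n < k then .bvar n else .bvar (n+1)
  | .fvar a => .fvar a
  | .func f ts => .func f (liftTs k ts)
  | .eps A => .eps (liftF (k+1) A)
def liftTs (k : ℕ) : Tms → Tms
  | .nil => .nil
  | .cons t ts => .cons (liftT k t) (liftTs k ts)
def liftF (k : ℕ) : Fm → Fm
  | .atom p ts => .atom p (liftTs k ts)
  | .and A B => .and (liftF k A) (liftF k B)
  | .or A B => .or (liftF k A) (liftF k B)
  | .imp A B => .imp (liftF k A) (liftF k B)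
  | .not A => .not (liftF k A)
  | .all A => .all (liftF (k+1) A)
  | .ex A => .ex (liftF (k+1) A)
end

/-! substitution of a term for the bound variable k -/
mutual
def subT (k : ℕ) (u : Tm) : Tm → Tm
  | .bvar n => if n = k then u else if n < k then .bvar n else .bvar (n-1)
  | .fvar a => .fvar a
  | .func f ts => .func f (subTs k u ts)
  | .eps A => .eps (subF (k+1) (liftT 0 u) A)
def subTs (k : ℕ) (u : Tm) : Tms → Tms
  | .nil => .nil
  | .cons t ts => .cons (subT k u t) (subTs k u ts)
def subF (k : ℕ) (u : Tm) : Fm → Fm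
  | .atom p ts => .atom p (subTs k u ts)
  | .and A B => .and (subF k u A) (subF k u B)
  | .or A B => .or (subF k u A) (subF k u B)
  | .imp A B => .imp (subF k u A) (subF k u B)
  | .not A => .not (subF k u A)
  | .all A => .all (subF (k+1) (liftT 0 u) A)
  | .ex A => .ex (subF (k+1) (liftT 0 u) A)
end

/-- instantiate the outermost bound variable of `A` with the term `t`:  A(t) -/
def inst0 (A : Fm) (t : Tm) : Fm := subF 0 t A

/-! substitution of a term for a *free* variable -/
mutual
def sfvT (a : ℕ) (u : Tm) : Tm → Tm
  | .bvar n => .bvar n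
  | .fvar b => if b = a then u else .fvar b
  | .func f ts => .func f (sfvTs a u ts)
  | .eps A => .eps (sfvF a (liftT 0 u) A)
def sfvTs (a : ℕ) (u : Tm) : Tms → Tms
  | .nil => .nil
  | .cons t ts => .cons (sfvT a u t) (sfvTs a u ts)
def sfvF (a : ℕ) (u : Tm) : Fm → Fm
  | .atom p ts => .atom p (sfvTs a u ts)
  | .and A B => .and (sfvF a u A) (sfvF a u B)
  | .or A B => .or (sfvF a u A) (sfvF a u B)
  | .imp A B => .imp (sfvF a u A) (sfvF a u B)
  | .not A => .not (sfvF a u A)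
  | .all A => .all (sfvF a (liftT 0 u) A)
  | .ex A => .ex (sfvF a (liftT 0 u) A)
end

/-! abstraction of a free variable into a bound variable (for universal closure) -/
mutual
def abT (a k : ℕ) : Tm → Tm
  | .bvar n => .bvar n
  | .fvar b => if b = a then .bvar k else .fvar b
  | .func f ts => .func f (abTs a k ts)
  | .eps A => .eps (abF a (k+1) A)
def abTs (a k : ℕ) : Tms → Tms
  | .nil => .nil
  | .cons t ts => .cons (abT a k t) (abTs a k ts)
def abF (a k : ℕ) : Fm → Fm
  | .atom p ts => .atom p (abTs a k ts)
  | .and A B => .and (abF a k A) (abF a k B)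
  | .or A B => .or (abF a k A) (abF a k B)
  | .imp A B => .imp (abF a k A) (abF a k B)
  | .not A => .not (abF a k A)
  | .all A => .all (abF a (k+1) A)
  | .ex A => .ex (abF a (k+1) A)
end

/-! free variables -/
mutual
def fvT : Tm → List ℕ
  | .bvar _ => []
  | .fvar a => [a]
  | .func _ ts => fvTs ts
  | .eps A => fvF A
def fvTs : Tms → List ℕ
  | .nil => []
  | .cons t ts => fvT t ++ fvTs ts
def fvF : Fm → List ℕ
  | .atom _ ts => fvTs ts
  | .and A B => fvF A ++ fvF B
  | .or A B => fvF A ++ fvF B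
  | .imp A B => fvF A ++ fvF B
  | .not A => fvF A
  | .all A => fvF A
  | .ex A => fvF A
end

/-! function symbols occurring in an expression -/
mutual
def fsT : Tm → List ℕ
  | .bvar _ => []
  | .fvar _ => []
  | .func f ts => f :: fsTs ts
  | .eps A => fsF A
def fsTs : Tms → List ℕ
  | .nil => []
  | .cons t ts => fsT t ++ fsTs ts
def fsF : Fm → List ℕ
  | .atom _ ts => fsTs ts
  | .and A B => fsF A ++ fsF B
  | .or A B => fsF A ++ fsF B
  | .imp A B => fsF A ++ fsF B
  | .not A => fsF A
  | .all A => fsF A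
  | .ex A => fsF A
end

/-! number of symbols (size) -/
mutual
def szT : Tm → ℕ
  | .bvar _ => 1
  | .fvar _ => 1
  | .func _ ts => 1 + szTs ts
  | .eps A => 1 + szF A
def szTs : Tms → ℕ
  | .nil => 0
  | .cons t ts => szT t + szTs ts
def szF : Fm → ℕ
  | .atom _ ts => 1 + szTs ts
  | .and A B => 1 + szF A + szF B
  | .or A B => 1 + szF A + szF B
  | .imp A B => 1 + szF A + szF B
  | .not A => 1 + szF A
  | .all A => 1 + szF A
  | .ex A => 1 + szF A
end

/-! epsilon-freeness (first-order language) and quantifier-freeness (epsilon language) -/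
mutual
def noEpsT : Tm → Bool
  | .bvar _ => true
  | .fvar _ => true
  | .func _ ts => noEpsTs ts
  | .eps _ => false
def noEpsTs : Tms → Bool
  | .nil => true
  | .cons t ts => noEpsT t && noEpsTs ts
def noEpsF : Fm → Bool
  | .atom _ ts => noEpsTs ts
  | .and A B => noEpsF A && noEpsF B
  | .or A B => noEpsF A && noEpsF B
  | .imp A B => noEpsF A && noEpsF B
  | .not A => noEpsF A
  | .all A => noEpsF A
  | .ex A => noEpsF A
end

/-- `A` is a formula of the first-order language: it contains no epsilon terms. -/
def isFO (A : Fm) : Bool := noEpsF A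

/-- quantifier-freeness: `A` belongs to the language of the epsilon calculus
(propositional language over epsilon terms) iff `qfree A`. -/
def qfree : Fm → Bool
  | .atom _ _ => true
  | .and A B => qfree A && qfree B
  | .or A B => qfree A && qfree B
  | .imp A B => qfree A && qfree B
  | .not A => qfree A
  | .all _ => false
  | .ex _ => false

/-- The epsilon translation [A]^ε of a formula. -/
def epsT : Fm → Fm
  | .atom p ts => .atom p ts
  | .and A B => .and (epsT A) (epsT B)
  | .or A B => .or (epsT A) (epsT B)
  | .imp A B => .imp (epsT A) (epsT B)
  | .not A => .not (epsT A)
  | .ex A => inst0 (epsT A) (.eps (epsT A))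
  | .all A => inst0 (epsT A) (.eps (.not (epsT A)))

/-! ## The matrix A^M of a formula: delete all quantifiers and replace the
variables bound by them by fresh free variables. -/
mutual
def mxT (b d : ℕ) : Tm → Tm
  | .bvar n => if n < d then .fvar (b + (d - 1 - n)) else .bvar (n - d)
  | .fvar a => .fvar a
  | .func f ts => .func f (mxTs b d ts)
  | .eps A => .eps A          -- (the matrix is only used on epsilon-free formulas)
def mxTs (b d : ℕ) : Tms → Tms
  | .nil => .nil
  | .cons t ts => .cons (mxT b d t) (mxTs b d ts)
def mxF (b d : ℕ) : Fm → Fm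
  | .atom p ts => .atom p (mxTs b d ts)
  | .and A B => .and (mxF b d A) (mxF b d B)
  | .or A B => .or (mxF b d A) (mxF b d B)
  | .imp A B => .imp (mxF b d A) (mxF b d B)
  | .not A => .not (mxF b d A)
  | .all A => mxF b (d+1) A
  | .ex A => mxF b (d+1) A
end

def maxFv (A : Fm) : ℕ := (fvF A).foldr max 0

/-- the matrix A^M of A -/
def matrix (A : Fm) : Fm := mxF (maxFv A + 1) 0 A

/-- universal closure ∀x̄ A over all free variables of A -/
def uclose (A : Fm) : Fm :=
  ((fvF A).dedup).foldr (fun a B => Fm.all (abF a 0 B)) A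

/-! ## Weak/strong quantifier occurrences.
`posW A` : all quantifier occurrences of `A` are weak when `A` occurs in the
succedent; `negW A` : likewise for the antecedent. -/
mutual
def posW : Fm → Bool
  | .atom _ _ => true
  | .and A B => posW A && posW B
  | .or A B => posW A && posW B
  | .imp A B => negW A && posW B
  | .not A => negW A
  | .all _ => false
  | .ex A => posW A
def negW : Fm → Bool
  | .atom _ _ => true
  | .and A B => negW A && negW B
  | .or A B => negW A && negW B
  | .imp A B => posW A && negW B
  | .not A => posW A
  | .all A => negW A
  | .ex _ => false
end

/-- the sequent Γ ⊢ Δ contains weak quantifier occurrences only -/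
def WeakSeq (Γ Δ : List Fm) : Prop :=
  (∀ A ∈ Γ, negW A = true) ∧ (∀ A ∈ Δ, posW A = true)

/-- the sequent Γ ⊢ Δ is in the first-order language -/
def FOSeq (Γ Δ : List Fm) : Prop :=
  (∀ A ∈ Γ, isFO A = true) ∧ (∀ A ∈ Δ, isFO A = true)

/-- the sequent Γ ⊢ Δ is in the language of the epsilon calculus -/
def EpsSeq (Γ Δ : List Fm) : Prop :=
  (∀ A ∈ Γ, qfree A = true) ∧ (∀ A ∈ Δ, qfree A = true)

def fvSeq (Γ Δ : List Fm) : List ℕ :=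
  (Γ ++ Δ).foldr (fun A l => fvF A ++ l) []

def fsSeq (Γ Δ : List Fm) : List ℕ :=
  (Γ ++ Δ).foldr (fun A l => fsF A ++ l) []

def seqSize (Γ Δ : List Fm) : ℕ :=
  (Γ ++ Δ).foldr (fun A n => szF A + n) 0


/-! ## LK derivation trees.
`Deriv Γ Δ` are derivation trees of the sequent Γ ⊢ Δ built from the rules of
Gentzen's LK, where the strong quantifier rules `allR`/`exL` carry an
eigenvariable but *no* correctness condition; the various eigenvariable
disciplines (LK, LK⁺, LK⁺⁺) are imposed as predicates on the trees below. -/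
inductive Deriv : List Fm → List Fm → Type where
  | ax (A : Fm) : Deriv [A] [A]
  | andL (A B : Fm) (Γ Δ : List Fm) :
      Deriv (A :: B :: Γ) Δ → Deriv (Fm.and A B :: Γ) Δ
  | andR (A B : Fm) (Γ₁ Δ₁ Γ₂ Δ₂ : List Fm) :
      Deriv Γ₁ (A :: Δ₁) → Deriv Γ₂ (B :: Δ₂) →
      Deriv (Γ₁ ++ Γ₂) (Fm.and A B :: (Δ₁ ++ Δ₂))
  | orL (A B : Fm) (Γ₁ Δ₁ Γ₂ Δ₂ : List Fm) :
      Deriv (A :: Γ₁) Δ₁ → Deriv (B :: Γ₂) Δ₂ →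
      Deriv (Fm.or A B :: (Γ₁ ++ Γ₂)) (Δ₁ ++ Δ₂)
  | orR (A B : Fm) (Γ Δ : List Fm) :
      Deriv Γ (A :: B :: Δ) → Deriv Γ (Fm.or A B :: Δ)
  | impL (A B : Fm) (Γ₁ Δ₁ Γ₂ Δ₂ : List Fm) :
      Deriv Γ₁ (A :: Δ₁) → Deriv (B :: Γ₂) Δ₂ →
      Deriv (Fm.imp A B :: (Γ₁ ++ Γ₂)) (Δ₁ ++ Δ₂)
  | impR (A B : Fm) (Γ Δ : List Fm) :
      Deriv (A :: Γ) (B :: Δ) → Deriv Γ (Fm.imp A B :: Δ)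
  | notL (A : Fm) (Γ Δ : List Fm) :
      Deriv Γ (A :: Δ) → Deriv (Fm.not A :: Γ) Δ
  | notR (A : Fm) (Γ Δ : List Fm) :
      Deriv (A :: Γ) Δ → Deriv Γ (Fm.not A :: Δ)
  | wL (A : Fm) (Γ Δ : List Fm) : Deriv Γ Δ → Deriv (A :: Γ) Δ
  | wR (A : Fm) (Γ Δ : List Fm) : Deriv Γ Δ → Deriv Γ (A :: Δ)
  | cL (A : Fm) (Γ Δ : List Fm) : Deriv (A :: A :: Γ) Δ → Deriv (A :: Γ) Δ
  | cR (A : Fm) (Γ Δ : List Fm) : Deriv Γ (A :: A :: Δ) → Deriv Γ (A :: Δ)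
  | cut (A : Fm) (Γ₁ Δ₁ Γ₂ Δ₂ : List Fm) :
      Deriv Γ₁ (A :: Δ₁) → Deriv (A :: Γ₂) Δ₂ →
      Deriv (Γ₁ ++ Γ₂) (Δ₁ ++ Δ₂)
  | allL (t : Tm) (A : Fm) (Γ Δ : List Fm) :
      Deriv (inst0 A t :: Γ) Δ → Deriv (Fm.all A :: Γ) Δ
  | allR (a : ℕ) (A : Fm) (Γ Δ : List Fm) :
      Deriv Γ (inst0 A (Tm.fvar a) :: Δ) → Deriv Γ (Fm.all A :: Δ)
  | exL (a : ℕ) (A : Fm) (Γ Δ : List Fm) :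
      Deriv (inst0 A (Tm.fvar a) :: Γ) Δ → Deriv (Fm.ex A :: Γ) Δ
  | exR (t : Tm) (A : Fm) (Γ Δ : List Fm) :
      Deriv Γ (inst0 A t :: Δ) → Deriv Γ (Fm.ex A :: Δ)
  | permL (Γ Γ' Δ : List Fm) : Γ.Perm Γ' → Deriv Γ Δ → Deriv Γ' Δ
  | permR (Γ Δ Δ' : List Fm) : Δ.Perm Δ' → Deriv Γ Δ → Deriv Γ Δ'

namespace Deriv

/-- the size of a derivation: the number of inference steps occurring in it -/
def size : ∀ {Γ Δ}, Deriv Γ Δ → ℕ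
  | _, _, ax _ => 1
  | _, _, andL _ _ _ _ d => d.size + 1
  | _, _, andR _ _ _ _ _ _ d e => d.size + e.size + 1
  | _, _, orL _ _ _ _ _ _ d e => d.size + e.size + 1
  | _, _, orR _ _ _ _ d => d.size + 1
  | _, _, impL _ _ _ _ _ _ d e => d.size + e.size + 1
  | _, _, impR _ _ _ _ d => d.size + 1
  | _, _, notL _ _ _ d => d.size + 1
  | _, _, notR _ _ _ d => d.size + 1
  | _, _, wL _ _ _ d => d.size + 1
  | _, _, wR _ _ _ d => d.size + 1
  | _, _, cL _ _ _ d => d.size + 1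
  | _, _, cR _ _ _ d => d.size + 1
  | _, _, cut _ _ _ _ _ d e => d.size + e.size + 1
  | _, _, allL _ _ _ _ d => d.size + 1
  | _, _, allR _ _ _ _ d => d.size + 1
  | _, _, exL _ _ _ _ d => d.size + 1
  | _, _, exR _ _ _ _ d => d.size + 1
  | _, _, permL _ _ _ _ d => d.size + 1
  | _, _, permR _ _ _ _ d => d.size + 1

/-- the list of cut formulas occurring in a derivation -/
def cutFms : ∀ {Γ Δ}, Deriv Γ Δ → List Fm
  | _, _, ax _ => []
  | _, _, andL _ _ _ _ d => d.cutFms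
  | _, _, andR _ _ _ _ _ _ d e => d.cutFms ++ e.cutFms
  | _, _, orL _ _ _ _ _ _ d e => d.cutFms ++ e.cutFms
  | _, _, orR _ _ _ _ d => d.cutFms
  | _, _, impL _ _ _ _ _ _ d e => d.cutFms ++ e.cutFms
  | _, _, impR _ _ _ _ d => d.cutFms
  | _, _, notL _ _ _ d => d.cutFms
  | _, _, notR _ _ _ d => d.cutFms
  | _, _, wL _ _ _ d => d.cutFms
  | _, _, wR _ _ _ d => d.cutFms
  | _, _, cL _ _ _ d => d.cutFms
  | _, _, cR _ _ _ d => d.cutFms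
  | _, _, cut A _ _ _ _ d e => A :: (d.cutFms ++ e.cutFms)
  | _, _, allL _ _ _ _ d => d.cutFms
  | _, _, allR _ _ _ _ d => d.cutFms
  | _, _, exL _ _ _ _ d => d.cutFms
  | _, _, exR _ _ _ _ d => d.cutFms
  | _, _, permL _ _ _ _ d => d.cutFms
  | _, _, permR _ _ _ _ d => d.cutFms

/-- data of the strong quantifier inferences of a derivation:
(eigenvariable, auxiliary formula, main formula) -/
def strongs : ∀ {Γ Δ}, Deriv Γ Δ → List (ℕ × Fm × Fm)
  | _, _, ax _ => []
  | _, _, andL _ _ _ _ d => d.strongs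
  | _, _, andR _ _ _ _ _ _ d e => d.strongs ++ e.strongs
  | _, _, orL _ _ _ _ _ _ d e => d.strongs ++ e.strongs
  | _, _, orR _ _ _ _ d => d.strongs
  | _, _, impL _ _ _ _ _ _ d e => d.strongs ++ e.strongs
  | _, _, impR _ _ _ _ d => d.strongs
  | _, _, notL _ _ _ d => d.strongs
  | _, _, notR _ _ _ d => d.strongs
  | _, _, wL _ _ _ d => d.strongs
  | _, _, wR _ _ _ d => d.strongs
  | _, _, cL _ _ _ d => d.strongs
  | _, _, cR _ _ _ d => d.strongs
  | _, _, cut _ _ _ _ _ d e => d.strongs ++ e.strongs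
  | _, _, allL _ _ _ _ d => d.strongs
  | _, _, allR a A _ _ d => (a, inst0 A (Tm.fvar a), Fm.all A) :: d.strongs
  | _, _, exL a A _ _ d => (a, inst0 A (Tm.fvar a), Fm.ex A) :: d.strongs
  | _, _, exR _ _ _ _ d => d.strongs
  | _, _, permL _ _ _ _ d => d.strongs
  | _, _, permR _ _ _ _ d => d.strongs

/-- the standard (local) eigenvariable conditions of LK: the eigenvariable of a
strong quantifier inference does not occur free in its conclusion -/
def Std : ∀ {Γ Δ}, Deriv Γ Δ → Prop
  | _, _, ax _ => True
  | _, _, andL _ _ _ _ d => d.Std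
  | _, _, andR _ _ _ _ _ _ d e => d.Std ∧ e.Std
  | _, _, orL _ _ _ _ _ _ d e => d.Std ∧ e.Std
  | _, _, orR _ _ _ _ d => d.Std
  | _, _, impL _ _ _ _ _ _ d e => d.Std ∧ e.Std
  | _, _, impR _ _ _ _ d => d.Std
  | _, _, notL _ _ _ d => d.Std
  | _, _, notR _ _ _ d => d.Std
  | _, _, wL _ _ _ d => d.Std
  | _, _, wR _ _ _ d => d.Std
  | _, _, cL _ _ _ d => d.Std
  | _, _, cR _ _ _ d => d.Std
  | _, _, cut _ _ _ _ _ d e => d.Std ∧ e.Std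
  | _, _, allL _ _ _ _ d => d.Std
  | _, _, allR a A Γ Δ d => a ∉ fvSeq Γ (Fm.all A :: Δ) ∧ d.Std
  | _, _, exL a A Γ Δ d => a ∉ fvSeq (Fm.ex A :: Γ) Δ ∧ d.Std
  | _, _, exR _ _ _ _ d => d.Std
  | _, _, permL _ _ _ _ d => d.Std
  | _, _, permR _ _ _ _ d => d.Std

end Deriv

/-- the side variable relation `<_φ`: `b` is a side variable of `a` in `φ` if `φ`
contains a strong quantifier inference with eigenvariable `a` whose auxiliary
formula contains the free variable `b` -/
def sideRel {Γ Δ} (d : Deriv Γ Δ) (a b : ℕ) : Prop :=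
  ∃ e ∈ d.strongs, e.1 = a ∧ b ∈ fvF e.2.1 ∧ b ≠ a

/-- acyclicity of a binary relation -/
def Acyc (r : ℕ → ℕ → Prop) : Prop := ∀ x, ¬ Relation.TransGen r x x

/-- LK⁺-suitability of (all strong quantifier inferences of) a derivation:
substitutability, the side variable condition, and weak regularity. -/
def SuitP {Γ Δ} (d : Deriv Γ Δ) : Prop :=
  (∀ e ∈ d.strongs, e.1 ∉ fvSeq Γ Δ) ∧
  Acyc (sideRel d) ∧
  (d.strongs.map (·.1)).Nodup

/-- LK⁺⁺-suitability: substitutability, the side variable condition, and very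
weak regularity (equal eigenvariables only for equal main formulas). -/
def SuitPP {Γ Δ} (d : Deriv Γ Δ) : Prop :=
  (∀ e ∈ d.strongs, e.1 ∉ fvSeq Γ Δ) ∧
  Acyc (sideRel d) ∧
  (∀ e₁ ∈ d.strongs, ∀ e₂ ∈ d.strongs, e₁.1 = e₂.1 → e₁.2.2 = e₂.2.2)

/-! ## The sequent calculus Lε of the epsilon calculus:
atomic axioms, the propositional, structural and cut rules of LK, the weak
quantifier rules ∃_r and ∀_l producing epsilon terms, and a substitution rule
replacing the strong quantifier inferences. -/
inductive EDeriv : List Fm → List Fm → Type where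
  | ax (p : ℕ) (ts : Tms) : EDeriv [Fm.atom p ts] [Fm.atom p ts]
  | andL (A B : Fm) (Γ Δ : List Fm) :
      EDeriv (A :: B :: Γ) Δ → EDeriv (Fm.and A B :: Γ) Δ
  | andR (A B : Fm) (Γ₁ Δ₁ Γ₂ Δ₂ : List Fm) :
      EDeriv Γ₁ (A :: Δ₁) → EDeriv Γ₂ (B :: Δ₂) →
      EDeriv (Γ₁ ++ Γ₂) (Fm.and A B :: (Δ₁ ++ Δ₂))
  | orL (A B : Fm) (Γ₁ Δ₁ Γ₂ Δ₂ : List Fm) :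
      EDeriv (A :: Γ₁) Δ₁ → EDeriv (B :: Γ₂) Δ₂ →
      EDeriv (Fm.or A B :: (Γ₁ ++ Γ₂)) (Δ₁ ++ Δ₂)
  | orR (A B : Fm) (Γ Δ : List Fm) :
      EDeriv Γ (A :: B :: Δ) → EDeriv Γ (Fm.or A B :: Δ)
  | impL (A B : Fm) (Γ₁ Δ₁ Γ₂ Δ₂ : List Fm) :
      EDeriv Γ₁ (A :: Δ₁) → EDeriv (B :: Γ₂) Δ₂ →
      EDeriv (Fm.imp A B :: (Γ₁ ++ Γ₂)) (Δ₁ ++ Δ₂)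
  | impR (A B : Fm) (Γ Δ : List Fm) :
      EDeriv (A :: Γ) (B :: Δ) → EDeriv Γ (Fm.imp A B :: Δ)
  | notL (A : Fm) (Γ Δ : List Fm) :
      EDeriv Γ (A :: Δ) → EDeriv (Fm.not A :: Γ) Δ
  | notR (A : Fm) (Γ Δ : List Fm) :
      EDeriv (A :: Γ) Δ → EDeriv Γ (Fm.not A :: Δ)
  | wL (A : Fm) (Γ Δ : List Fm) : EDeriv Γ Δ → EDeriv (A :: Γ) Δ
  | wR (A : Fm) (Γ Δ : List Fm) : EDeriv Γ Δ → EDeriv Γ (A :: Δ)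
  | cL (A : Fm) (Γ Δ : List Fm) : EDeriv (A :: A :: Γ) Δ → EDeriv (A :: Γ) Δ
  | cR (A : Fm) (Γ Δ : List Fm) : EDeriv Γ (A :: A :: Δ) → EDeriv Γ (A :: Δ)
  | cut (A : Fm) (Γ₁ Δ₁ Γ₂ Δ₂ : List Fm) :
      EDeriv Γ₁ (A :: Δ₁) → EDeriv (A :: Γ₂) Δ₂ →
      EDeriv (Γ₁ ++ Γ₂) (Δ₁ ++ Δ₂)
  | allL (t : Tm) (A : Fm) (Γ Δ : List Fm) :
      EDeriv (inst0 A t :: Γ) Δ →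
      EDeriv (inst0 A (Tm.eps (Fm.not A)) :: Γ) Δ
  | exR (t : Tm) (A : Fm) (Γ Δ : List Fm) :
      EDeriv Γ (inst0 A t :: Δ) →
      EDeriv Γ (inst0 A (Tm.eps A) :: Δ)
  | subst (a : ℕ) (t : Tm) (Γ Δ : List Fm) :
      EDeriv Γ Δ → EDeriv (Γ.map (sfvF a t)) (Δ.map (sfvF a t))
  | permL (Γ Γ' Δ : List Fm) : Γ.Perm Γ' → EDeriv Γ Δ → EDeriv Γ' Δ
  | permR (Γ Δ Δ' : List Fm) : Δ.Perm Δ' → EDeriv Γ Δ → EDeriv Γ Δ'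

namespace EDeriv

/-- the size of an Lε derivation -/
def size : ∀ {Γ Δ}, EDeriv Γ Δ → ℕ
  | _, _, ax _ _ => 1
  | _, _, andL _ _ _ _ d => d.size + 1
  | _, _, andR _ _ _ _ _ _ d e => d.size + e.size + 1
  | _, _, orL _ _ _ _ _ _ d e => d.size + e.size + 1
  | _, _, orR _ _ _ _ d => d.size + 1
  | _, _, impL _ _ _ _ _ _ d e => d.size + e.size + 1
  | _, _, impR _ _ _ _ d => d.size + 1
  | _, _, notL _ _ _ d => d.size + 1
  | _, _, notR _ _ _ d => d.size + 1
  | _, _, wL _ _ _ d => d.size + 1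
  | _, _, wR _ _ _ d => d.size + 1
  | _, _, cL _ _ _ d => d.size + 1
  | _, _, cR _ _ _ d => d.size + 1
  | _, _, cut _ _ _ _ _ d e => d.size + e.size + 1
  | _, _, allL _ _ _ _ d => d.size + 1
  | _, _, exR _ _ _ _ d => d.size + 1
  | _, _, subst _ _ _ _ d => d.size + 1
  | _, _, permL _ _ _ _ d => d.size + 1
  | _, _, permR _ _ _ _ d => d.size + 1

/-- the list of cut formulas occurring in an Lε derivation -/
def cutFms : ∀ {Γ Δ}, EDeriv Γ Δ → List Fm
  | _, _, ax _ _ => []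
  | _, _, andL _ _ _ _ d => d.cutFms
  | _, _, andR _ _ _ _ _ _ d e => d.cutFms ++ e.cutFms
  | _, _, orL _ _ _ _ _ _ d e => d.cutFms ++ e.cutFms
  | _, _, orR _ _ _ _ d => d.cutFms
  | _, _, impL _ _ _ _ _ _ d e => d.cutFms ++ e.cutFms
  | _, _, impR _ _ _ _ d => d.cutFms
  | _, _, notL _ _ _ d => d.cutFms
  | _, _, notR _ _ _ d => d.cutFms
  | _, _, wL _ _ _ d => d.cutFms
  | _, _, wR _ _ _ d => d.cutFms
  | _, _, cL _ _ _ d => d.cutFms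
  | _, _, cR _ _ _ d => d.cutFms
  | _, _, cut A _ _ _ _ d e => A :: (d.cutFms ++ e.cutFms)
  | _, _, allL _ _ _ _ d => d.cutFms
  | _, _, exR _ _ _ _ d => d.cutFms
  | _, _, subst _ _ _ _ d => d.cutFms
  | _, _, permL _ _ _ _ d => d.cutFms
  | _, _, permR _ _ _ _ d => d.cutFms

end EDeriv

/-! ## Elementary functions and polynomial bounds -/

/-- `iterExp k n` is the `k`-fold iterated exponential 2^2^...^n. -/
def iterExp : ℕ → ℕ → ℕ
  | 0, n => n
  | k+1, n => 2 ^ iterExp k n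

/-- A function ℕ → ℕ is elementary (in the sense of Kalmár: definable by a
quantifier-free formula from +, ×, and x ↦ 2^x) iff it is majorized by some
fixed iterated exponential; we use this growth-rate characterization. -/
def IsElementary (f : ℕ → ℕ) : Prop := ∃ k, ∀ n, f n ≤ iterExp k n

/-- `g` is polynomially bounded -/
def PolyBdd (g : ℕ → ℕ) : Prop := ∃ p : Polynomial ℕ, ∀ n, g n ≤ p.eval n

/-! ## Skolemization (relationally): `SkP F A B` (`SkN F A B`) holds if `B` is
obtained from `A`, occurring in the succedent (antecedent), by replacing the
strong quantifiers by terms built from fresh function symbols in `F`. -/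
mutual
inductive SkP (F : ℕ → Prop) : Fm → Fm → Prop where
  | atom (p ts) : SkP F (Fm.atom p ts) (Fm.atom p ts)
  | and {A A' B B'} : SkP F A A' → SkP F B B' → SkP F (Fm.and A B) (Fm.and A' B')
  | or {A A' B B'} : SkP F A A' → SkP F B B' → SkP F (Fm.or A B) (Fm.or A' B')
  | imp {A A' B B'} : SkN F A A' → SkP F B B' → SkP F (Fm.imp A B) (Fm.imp A' B')
  | not {A A'} : SkN F A A' → SkP F (Fm.not A) (Fm.not A')
  | ex {A A'} : SkP F A A' → SkP F (Fm.ex A) (Fm.ex A')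
  | all {A B} (f : ℕ) (ts : Tms) : F f →
      SkP F (inst0 A (Tm.func f ts)) B → SkP F (Fm.all A) B
inductive SkN (F : ℕ → Prop) : Fm → Fm → Prop where
  | atom (p ts) : SkN F (Fm.atom p ts) (Fm.atom p ts)
  | and {A A' B B'} : SkN F A A' → SkN F B B' → SkN F (Fm.and A B) (Fm.and A' B')
  | or {A A' B B'} : SkN F A A' → SkN F B B' → SkN F (Fm.or A B) (Fm.or A' B')
  | imp {A A' B B'} : SkP F A A' → SkN F B B' → SkN F (Fm.imp A B) (Fm.imp A' B')
  | not {A A'} : SkP F A A' → SkN F (Fm.not A) (Fm.not A')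
  | all {A A'} : SkN F A A' → SkN F (Fm.all A) (Fm.all A')
  | ex {A B} (f : ℕ) (ts : Tms) : F f →
      SkN F (inst0 A (Tm.func f ts)) B → SkN F (Fm.ex A) B
end

/-- `S'` is a Skolemization of the sequent `S` using fresh function symbols from `F` -/
def SkolemSeq (F : ℕ → Prop) (S S' : List Fm × List Fm) : Prop :=
  List.Forall₂ (SkN F) S.1 S'.1 ∧ List.Forall₂ (SkP F) S.2 S'.2

/-!
Let a predicate `holds` of small numbers be closed under successor, and let `T i` be the tower
`2 ^ 2 ^ ⋯` of height `i`. Solovay's segments `I 0 x ↔ holds x` and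
`I (j + 1) x ↔ ∀ y, I j y → I j (y + 2 ^ x)` give short proofs of `holds (T i)` with cuts on the
formulas `I j x`, whose quantifier complexity grows with `j`. In the epsilon calculus the quantifier
becomes an epsilon term. If implications between formulas are moreover coded by terms, with axioms
for the truth of codes, then every `I j x` is an atom `holds t`. A cut on such an atom is simulated
by a universal instance of the tautological axiom `∀ x, holds x → holds x`, since its instances
`holds t → holds t` are implications in the antecedent. Hence the epsilon translation of
`axioms ⊢ holds (T i)` has cut-free proofs of quadratic size.

A cut-free first-order derivation of that weak sequent contains no strong inference at all, so the
suitability conditions of LK⁺ and LK⁺⁺ are vacuous. For `n < T i` call the numbers up to `n` small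
and let the quantifiers skip the value `n`. The axioms remain true and `holds (T i)` is false, so
`n` must be the value of a term instantiated in the derivation. Therefore the derivation has at
least `T i` inferences, and no elementary function of `i` bounds `T i`.
-/

/-! ### Lifting and substitution -/

mutual

theorem liftT_liftT {i k : ℕ} (h : i ≤ k) (t : Tm) :
    liftT (k + 1) (liftT i t) = liftT i (liftT k t) := by
  cases t with
  | bvar n => grind [liftT]
  | fvar a => rfl
  | func f ts => simp only [liftT, liftTs_liftTs h ts]
  | eps A => simp only [liftT, liftF_liftF (Nat.succ_le_succ h) A]

theorem liftTs_liftTs {i k : ℕ} (h : i ≤ k) (ts : Tms) :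
    liftTs (k + 1) (liftTs i ts) = liftTs i (liftTs k ts) := by
  cases ts with
  | nil => rfl
  | cons t ts => simp only [liftTs, liftT_liftT h t, liftTs_liftTs h ts]

theorem liftF_liftF {i k : ℕ} (h : i ≤ k) (A : Fm) :
    liftF (k + 1) (liftF i A) = liftF i (liftF k A) := by
  cases A with
  | atom p ts => simp only [liftF, liftTs_liftTs h ts]
  | and A B | or A B | imp A B => simp only [liftF, liftF_liftF h A, liftF_liftF h B]
  | not A => simp only [liftF, liftF_liftF h A]
  | all A | ex A => simp only [liftF, liftF_liftF (Nat.succ_le_succ h) A]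

end

mutual

theorem subT_liftT_self (k : ℕ) (u t : Tm) : subT k u (liftT k t) = t := by
  cases t with
  | bvar n => grind [liftT, subT]
  | fvar a => rfl
  | func f ts => simp only [liftT, subT, subTs_liftTs_self k u ts]
  | eps A => simp only [liftT, subT, subF_liftF_self (k + 1) (liftT 0 u) A]

theorem subTs_liftTs_self (k : ℕ) (u : Tm) (ts : Tms) : subTs k u (liftTs k ts) = ts := by
  cases ts with
  | nil => rfl
  | cons t ts => simp only [liftTs, subTs, subT_liftT_self k u t, subTs_liftTs_self k u ts]

theorem subF_liftF_self (k : ℕ) (u : Tm) (A : Fm) : subF k u (liftF k A) = A := by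
  cases A with
  | atom p ts => simp only [liftF, subF, subTs_liftTs_self k u ts]
  | and A B | or A B | imp A B =>
    simp only [liftF, subF, subF_liftF_self k u A, subF_liftF_self k u B]
  | not A => simp only [liftF, subF, subF_liftF_self k u A]
  | all A | ex A => simp only [liftF, subF, subF_liftF_self (k + 1) (liftT 0 u) A]

end

mutual

theorem subT_liftT {i k : ℕ} (h : i ≤ k) (u t : Tm) :
    subT (k + 1) (liftT i u) (liftT i t) = liftT i (subT k u t) := by
  cases t with
  | bvar n => grind [liftT, subT]
  | fvar a => rfl
  | func f ts => simp only [liftT, subT, subTs_liftTs h u ts]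
  | eps A =>
    simp only [liftT, subT, ← liftT_liftT (Nat.zero_le i) u,
      subF_liftF (Nat.succ_le_succ h) (liftT 0 u) A]

theorem subTs_liftTs {i k : ℕ} (h : i ≤ k) (u : Tm) (ts : Tms) :
    subTs (k + 1) (liftT i u) (liftTs i ts) = liftTs i (subTs k u ts) := by
  cases ts with
  | nil => rfl
  | cons t ts => simp only [liftTs, subTs, subT_liftT h u t, subTs_liftTs h u ts]

theorem subF_liftF {i k : ℕ} (h : i ≤ k) (u : Tm) (A : Fm) :
    subF (k + 1) (liftT i u) (liftF i A) = liftF i (subF k u A) := by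
  cases A with
  | atom p ts => simp only [liftF, subF, subTs_liftTs h u ts]
  | and A B | or A B | imp A B => simp only [liftF, subF, subF_liftF h u A, subF_liftF h u B]
  | not A => simp only [liftF, subF, subF_liftF h u A]
  | all A | ex A =>
    simp only [liftF, subF, ← liftT_liftT (Nat.zero_le i) u,
      subF_liftF (Nat.succ_le_succ h) (liftT 0 u) A]

end

mutual

theorem subT_subT {i k : ℕ} (h : i ≤ k) (u s t : Tm) :
    subT k u (subT i s t) = subT i (subT k u s) (subT (k + 1) (liftT i u) t) := by
  cases t with
  | bvar n => grind [subT, subT_liftT_self]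
  | fvar a => rfl
  | func f ts => simp only [subT, subTs_subTs h u s ts]
  | eps A =>
    simp only [subT, subF_subF (Nat.succ_le_succ h) (liftT 0 u) (liftT 0 s) A,
      subT_liftT (Nat.zero_le k), liftT_liftT (Nat.zero_le i)]

theorem subTs_subTs {i k : ℕ} (h : i ≤ k) (u s : Tm) (ts : Tms) :
    subTs k u (subTs i s ts) = subTs i (subT k u s) (subTs (k + 1) (liftT i u) ts) := by
  cases ts with
  | nil => rfl
  | cons t ts => simp only [subTs, subT_subT h u s t, subTs_subTs h u s ts]

theorem subF_subF {i k : ℕ} (h : i ≤ k) (u s : Tm) (A : Fm) :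
    subF k u (subF i s A) = subF i (subT k u s) (subF (k + 1) (liftT i u) A) := by
  cases A with
  | atom p ts => simp only [subF, subTs_subTs h u s ts]
  | and A B | or A B | imp A B => simp only [subF, subF_subF h u s A, subF_subF h u s B]
  | not A => simp only [subF, subF_subF h u s A]
  | all A | ex A =>
    simp only [subF, subF_subF (Nat.succ_le_succ h) (liftT 0 u) (liftT 0 s) A,
      subT_liftT (Nat.zero_le k), liftT_liftT (Nat.zero_le i)]

end

theorem epsT_subF (k : ℕ) (u : Tm) (A : Fm) : epsT (subF k u A) = subF k u (epsT A) := by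
  cases A with
  | atom p ts => rfl
  | and A B | or A B | imp A B => simp only [subF, epsT, epsT_subF k u A, epsT_subF k u B]
  | not A => simp only [subF, epsT, epsT_subF k u A]
  | all A | ex A =>
    simp only [subF, epsT, inst0, epsT_subF (k + 1) (liftT 0 u) A, subF_subF (Nat.zero_le k), subT]

theorem epsT_inst0 (A : Fm) (t : Tm) : epsT (inst0 A t) = inst0 (epsT A) t :=
  epsT_subF 0 t A

/-! ### Sized cut-free derivability in Lε -/

/-- `CutFree n Γ C`: the sequent `Γ ⊢ C` has a cut-free Lε-derivation of size at most `n`.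
The antecedent is a multiset, so that exchange is implicit. -/
def CutFree (n : ℕ) (Γ : Multiset Fm) (C : Fm) : Prop :=
  ∃ L : List Fm, (L : Multiset Fm) = Γ ∧ ∃ e : EDeriv L [C], e.cutFms = [] ∧ e.size ≤ n

namespace CutFree

variable {n m : ℕ} {Γ Δ : Multiset Fm} {A B C : Fm}

theorem mono (h : CutFree n Γ C) (hnm : n ≤ m) : CutFree m Γ C :=
  let ⟨L, hL, e, hcut, hsize⟩ := h
  ⟨L, hL, e, hcut, hsize.trans hnm⟩

theorem exists_of_perm {L : List Fm} (h : CutFree n L C) :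
    ∃ e : EDeriv L [C], e.cutFms = [] ∧ e.size ≤ n + 1 :=
  let ⟨_, hL, e, hcut, hsize⟩ := h
  ⟨.permL _ _ _ (Multiset.coe_eq_coe.mp hL) e, hcut, Nat.succ_le_succ hsize⟩

theorem exists_cons (h : CutFree n (A ::ₘ Γ) C) :
    ∃ L : List Fm, (L : Multiset Fm) = Γ ∧
      ∃ e : EDeriv (A :: L) [C], e.cutFms = [] ∧ e.size ≤ n + 1 :=
  ⟨Γ.toList, Γ.coe_toList, exists_of_perm (by simpa [← Multiset.cons_coe] using h)⟩

theorem ax (p : ℕ) (ts : Tms) : CutFree 1 {.atom p ts} (.atom p ts) :=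
  ⟨_, rfl, .ax p ts, rfl, le_rfl⟩

theorem weaken (A : Fm) (h : CutFree n Γ C) : CutFree (n + 1) (A ::ₘ Γ) C := by
  obtain ⟨L, rfl, e, hcut, hsize⟩ := h
  exact ⟨A :: L, rfl, .wL _ _ _ e, hcut, Nat.succ_le_succ hsize⟩

theorem contract (h : CutFree n (A ::ₘ A ::ₘ Γ) C) : CutFree (n + 2) (A ::ₘ Γ) C := by
  obtain ⟨e, hcut, hsize⟩ := exists_of_perm (L := A :: A :: Γ.toList)
    (by simpa [← Multiset.cons_coe] using h)
  exact ⟨A :: Γ.toList, by simp [← Multiset.cons_coe], .cL _ _ _ e, hcut, Nat.succ_le_succ hsize⟩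

theorem impR (h : CutFree n (A ::ₘ Γ) B) : CutFree (n + 2) Γ (.imp A B) := by
  obtain ⟨L, rfl, e, hcut, hsize⟩ := h.exists_cons
  exact ⟨L, rfl, .impR _ _ _ _ e, hcut, Nat.succ_le_succ hsize⟩

theorem impL (hA : CutFree n Γ A) (hB : CutFree m (B ::ₘ Δ) C) :
    CutFree (n + m + 2) (.imp A B ::ₘ (Γ + Δ)) C := by
  obtain ⟨L₁, rfl, e₁, hcut₁, hsize₁⟩ := hA
  obtain ⟨L₂, rfl, e₂, hcut₂, hsize₂⟩ := hB.exists_cons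
  refine ⟨.imp A B :: (L₁ ++ L₂), rfl, .impL _ _ _ [] _ _ e₁ e₂, ?_, ?_⟩
  · simp [EDeriv.cutFms, hcut₁, hcut₂]
  · simp only [EDeriv.size]
    omega

theorem allL (t : Tm) (h : CutFree n (inst0 A t ::ₘ Γ) C) :
    CutFree (n + 2) (inst0 A (.eps (.not A)) ::ₘ Γ) C := by
  obtain ⟨L, rfl, e, hcut, hsize⟩ := h.exists_cons
  exact ⟨_ :: L, rfl, .allL t _ _ _ e, hcut, Nat.succ_le_succ hsize⟩

theorem weaken_add (Γ : Multiset Fm) (h : CutFree n Δ C) : CutFree (n + Γ.card) (Γ + Δ) C := by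
  induction Γ using Multiset.induction with
  | empty => simpa using h
  | cons A Γ ih => simpa [add_assoc] using ih.weaken A

theorem contract_subset (hsub : Γ ⊆ Δ) (h : CutFree n (Γ + Δ) C) :
    CutFree (n + 2 * Γ.card) Δ C := by
  induction Γ using Multiset.induction generalizing n with
  | empty => simpa using h
  | cons A Γ ih =>
    obtain ⟨hA, hΓ⟩ := Multiset.cons_subset.mp hsub
    obtain ⟨Δ', rfl⟩ := Multiset.exists_cons_of_mem hA
    have hcontract : CutFree (n + 2) (A ::ₘ (Γ + Δ')) C := contract (by simpa using h)
    exact (ih hΓ (by simpa using hcontract)).mono (by rw [Multiset.card_cons]; omega)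

end CutFree

/-- `Derivable n T C`: there is a cut-free Lε-derivation of `C` from finitely many formulas of `T`,
built from at most `n` rules, where structural rules are not counted. The weight 5 pays for the
structural rules that accompany one axiom or logical rule, and each antecedent formula carries a
credit of 2 for its contraction. -/
def Derivable (n : ℕ) (T : Set Fm) (C : Fm) : Prop :=
  ∃ (Γ : Multiset Fm) (s : ℕ), (∀ A ∈ Γ, A ∈ T) ∧ CutFree s Γ C ∧ s + 2 * Γ.card ≤ 5 * n

namespace Derivable

variable {n m : ℕ} {T T' : Set Fm} {A B C : Fm}

theorem mono (h : Derivable n T C) (hnm : n ≤ m) : Derivable m T C :=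
  let ⟨Γ, s, hΓ, hC, hs⟩ := h
  ⟨Γ, s, hΓ, hC, hs.trans (Nat.mul_le_mul_left 5 hnm)⟩

theorem weaken (h : Derivable n T C) (hT : T ⊆ T') : Derivable n T' C :=
  let ⟨Γ, s, hΓ, hC, hs⟩ := h
  ⟨Γ, s, fun A hA ↦ hT (hΓ A hA), hC, hs⟩

theorem weaken_insert (h : Derivable n T C) : Derivable n (insert A T) C :=
  h.weaken (Set.subset_insert A T)

theorem exists_cons_of_insert (h : Derivable n (insert A T) C) :
    ∃ (Γ : Multiset Fm) (s : ℕ), (∀ B ∈ Γ, B ∈ T) ∧ CutFree s (A ::ₘ Γ) C ∧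
      s + 2 * Γ.card ≤ 5 * n + 1 := by
  classical
  obtain ⟨Γ, s, hΓ, hC, hs⟩ := h
  set As := Γ.filter (· = A)
  set Γ' := Γ.filter (¬ · = A)
  have hsplit : As + Γ' = Γ := Multiset.filter_add_not _ Γ
  have hcard : As.card + Γ'.card = Γ.card := by rw [← hsplit, Multiset.card_add]
  have hsub : As ⊆ A ::ₘ Γ' := fun B hB ↦ by
    simp [(Multiset.mem_filter.mp hB).2]
  have hweak : CutFree (s + 1) (As + A ::ₘ Γ') C := by
    simpa [Multiset.add_cons, hsplit] using hC.weaken A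
  refine ⟨Γ', _, fun B hB ↦ ?_, hweak.contract_subset hsub, by omega⟩
  obtain ⟨hBΓ, hBA⟩ := Multiset.mem_filter.mp hB
  exact (hΓ B hBΓ).resolve_left hBA

theorem hyp {p : ℕ} {ts : Tms} (h : Fm.atom p ts ∈ T) : Derivable 1 T (.atom p ts) :=
  ⟨{.atom p ts}, 1, by simpa using h, .ax p ts, by simp⟩

theorem impR (h : Derivable n (insert A T) B) : Derivable (n + 1) T (.imp A B) :=
  let ⟨Γ, s, hΓ, hB, hs⟩ := h.exists_cons_of_insert
  ⟨Γ, s + 2, hΓ, hB.impR, by omega⟩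

theorem impL (hAB : .imp A B ∈ T) (hA : Derivable n T A) (hC : Derivable m (insert B T) C) :
    Derivable (n + m + 1) T C := by
  obtain ⟨Γ₁, s₁, hΓ₁, hA, hs₁⟩ := hA
  obtain ⟨Γ₂, s₂, hΓ₂, hC, hs₂⟩ := hC.exists_cons_of_insert
  refine ⟨_, _, ?_, hA.impL hC, ?_⟩
  · grind
  · simp only [Multiset.card_cons, Multiset.card_add]
    omega

theorem allL (t : Tm) (hA : inst0 A (.eps (.not A)) ∈ T)
    (h : Derivable n (insert (inst0 A t) T) C) : Derivable (n + 1) T C := by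
  obtain ⟨Γ, s, hΓ, hC, hs⟩ := h.exists_cons_of_insert
  refine ⟨_, _, ?_, hC.allL t, ?_⟩
  · grind
  · rw [Multiset.card_cons]
    omega

theorem allL_epsT (t : Tm) (hA : epsT (.all A) ∈ T)
    (h : Derivable n (insert (epsT (inst0 A t)) T) C) : Derivable (n + 1) T C :=
  allL t hA (epsT_inst0 A t ▸ h)

theorem exists_eDeriv {Γ : List Fm} (h : Derivable n {A | A ∈ Γ} C) :
    ∃ e : EDeriv Γ [C], e.cutFms = [] ∧ e.size ≤ 5 * n + Γ.length + 1 := by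
  obtain ⟨Γ', s, hΓ', hC, hs⟩ := h
  have hsub : Γ' ⊆ (Γ : Multiset Fm) := hΓ'
  have hweak : CutFree (s + Γ.length) (Γ' + Γ) C := by
    simpa [add_comm] using hC.weaken_add Γ
  exact ((hweak.contract_subset hsub).mono (by omega)).exists_of_perm

end Derivable

/-! ### The theory of the shortening -/

/-- The term `0`. -/
abbrev Tm.zero : Tm := .func 0 .nil

/-- The successor of `x`. -/
abbrev Tm.succ (x : Tm) : Tm := .func 1 (.cons x .nil)

/-- The term `y + 2 ^ x`, built by a single function symbol. -/
abbrev Tm.addTwoPow (y x : Tm) : Tm := .func 2 (.cons y (.cons x .nil))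

/-- The code of the implication between the formulas coded by `p` and `q`. -/
abbrev Tm.impCode (p q : Tm) : Tm := .func 3 (.cons p (.cons q .nil))

/-- The predicate which says of a number that it is small, and of a code that it is true. -/
abbrev Fm.holds (x : Tm) : Fm := .atom 0 (.cons x .nil)

/-- Equality. -/
abbrev Fm.eq (x y : Tm) : Fm := .atom 1 (.cons x (.cons y .nil))

open Tm Fm

/-- Small numbers are closed under successor. -/
abbrev succSmall : Fm := .all (.imp (holds (.bvar 0)) (holds (succ (.bvar 0))))

/-- A tautology, which stands in for cuts on formulas `holds x`. -/
abbrev holdsTaut : Fm := .all (.imp (holds (.bvar 0)) (holds (.bvar 0)))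

/-- `y + 1 = y + 2 ^ 0`. -/
abbrev succEqAddTwoPow : Fm := .all (.eq (succ (.bvar 0)) (addTwoPow (.bvar 0) zero))

/-- `y + 2 ^ x + 2 ^ x = y + 2 ^ (x + 1)`. -/
abbrev addTwoPowTwice : Fm :=
  .all (.all (.eq (addTwoPow (addTwoPow (.bvar 1) (.bvar 0)) (.bvar 0))
    (addTwoPow (.bvar 1) (succ (.bvar 0)))))

/-- Congruence of equality for the exponent of `addTwoPow`. -/
abbrev eqCongr : Fm :=
  .all (.all (.all (.imp (.eq (.bvar 2) (.bvar 1))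
    (.eq (addTwoPow (.bvar 0) (.bvar 2)) (addTwoPow (.bvar 0) (.bvar 1))))))

/-- Congruence of equality for `holds`. -/
abbrev holdsCongr : Fm :=
  .all (.all (.imp (.eq (.bvar 1) (.bvar 0)) (.imp (holds (.bvar 1)) (holds (.bvar 0)))))

/-- Modus ponens for implication codes. -/
abbrev holdsMp : Fm :=
  .all (.all (.imp (holds (impCode (.bvar 1) (.bvar 0)))
    (.imp (holds (.bvar 1)) (holds (.bvar 0)))))

/-- The truth condition for implication codes. -/
abbrev holdsImp : Fm :=
  .all (.all (.imp (.imp (holds (.bvar 1)) (holds (.bvar 0)))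
    (holds (impCode (.bvar 1) (.bvar 0)))))

/-- The universal theory of small numbers, exponentiation and implication codes. -/
def powTheory : List Fm :=
  [holds zero, succSmall, holdsTaut, succEqAddTwoPow, addTwoPowTwice, eqCongr, holdsCongr, holdsMp,
    holdsImp]

/-- The sets of formulas which contain the epsilon translation of `powTheory`. -/
class ExtendsPowTheory (T : Set Fm) : Prop where
  epsT_mem : ∀ A ∈ powTheory, epsT A ∈ T

instance (T : Set Fm) (A : Fm) [ExtendsPowTheory T] : ExtendsPowTheory (insert A T) :=
  ⟨fun B hB ↦ .inr (ExtendsPowTheory.epsT_mem B hB)⟩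

namespace Derivable

open ExtendsPowTheory

section

variable {n : ℕ} {T : Set Fm} {A C : Fm}

theorem allL_epsT₂ (t u : Tm) (hA : epsT (.all (.all A)) ∈ T)
    (h : Derivable n (insert (epsT (inst0 (subF 1 (liftT 0 t) A) u)) T) C) :
    Derivable (n + 2) T C :=
  allL_epsT t hA <| allL_epsT u (.inl rfl) <| h.weaken <|
    Set.insert_subset_insert (Set.subset_insert _ _)

theorem allL_epsT₃ (t u v : Tm) (hA : epsT (.all (.all (.all A))) ∈ T)
    (h : Derivable n (insert (epsT (inst0 (subF 1 (liftT 0 u)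
      (subF 2 (liftT 0 (liftT 0 t)) A)) v)) T) C) :
    Derivable (n + 3) T C :=
  allL_epsT t hA <| allL_epsT₂ u v (.inl rfl) <| h.weaken <|
    Set.insert_subset_insert (Set.subset_insert _ _)

end

variable {n m : ℕ} {T : Set Fm} [ExtendsPowTheory T] {C : Fm} {a b p q x : Tm}

theorem holds_zero : Derivable 1 T (holds zero) :=
  hyp (epsT_mem (holds zero) (by simp [powTheory]))

theorem holds_succ (h : Derivable n T (holds x)) : Derivable (n + 3) T (holds (succ x)) :=
  allL_epsT x (epsT_mem succSmall (by simp [powTheory])) <|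
    impL (.inl rfl) h.weaken_insert (hyp (.inl rfl))

theorem holds_cut (hx : Derivable n T (holds x)) (h : Derivable m (insert (holds x) T) C) :
    Derivable (n + m + 2) T C :=
  allL_epsT x (epsT_mem holdsTaut (by simp [powTheory])) <|
    impL (.inl rfl) hx.weaken_insert <| h.weaken <| Set.insert_subset_insert (Set.subset_insert _ _)

theorem eq_addTwoPow_zero (x : Tm) : Derivable 2 T (.eq (succ x) (addTwoPow x zero)) :=
  allL_epsT x (epsT_mem succEqAddTwoPow (by simp [powTheory])) (hyp (.inl rfl))

theorem eq_addTwoPow_succ (y x : Tm) :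
    Derivable 3 T (.eq (addTwoPow (addTwoPow y x) x) (addTwoPow y (succ x))) := by
  refine allL_epsT₂ y x (epsT_mem addTwoPowTwice (by simp [powTheory])) (hyp (.inl ?_))
  simp [epsT, inst0, subF, subT, subTs, subT_liftT_self]

theorem eq_addTwoPow_congr (y : Tm) (h : Derivable n T (.eq a b)) :
    Derivable (n + 5) T (.eq (addTwoPow y a) (addTwoPow y b)) := by
  refine allL_epsT₃ a b y (epsT_mem eqCongr (by simp [powTheory])) ?_
  simpa [epsT, inst0, subF, subT, subTs, subT_liftT_self, subT_liftT] using
    impL (.inl rfl) h.weaken_insert (hyp (.inl rfl))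

theorem holds_congr (hab : Derivable n T (.eq a b)) (ha : Derivable m T (holds a)) :
    Derivable (n + m + 5) T (holds b) := by
  refine allL_epsT₂ a b (epsT_mem holdsCongr (by simp [powTheory])) ?_
  simpa [epsT, inst0, subF, subT, subTs, subT_liftT_self, add_assoc] using
    impL (.inl rfl) hab.weaken_insert
      (impL (.inl rfl) ha.weaken_insert.weaken_insert (hyp (.inl rfl)))

theorem holds_mp (hpq : Derivable n T (holds (impCode p q))) (hp : Derivable m T (holds p)) :
    Derivable (n + m + 5) T (holds q) := by
  refine allL_epsT₂ p q (epsT_mem holdsMp (by simp [powTheory])) ?_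
  simpa [epsT, inst0, subF, subT, subTs, subT_liftT_self, add_assoc] using
    impL (.inl rfl) hpq.weaken_insert
      (impL (.inl rfl) hp.weaken_insert.weaken_insert (hyp (.inl rfl)))

theorem holds_impCode (h : Derivable n (insert (holds p) T) (holds q)) :
    Derivable (n + 5) T (holds (impCode p q)) := by
  refine allL_epsT₂ p q (epsT_mem holdsImp (by simp [powTheory])) ?_
  simpa [epsT, inst0, subF, subT, subTs, subT_liftT_self] using
    impL (.inl rfl) h.impR.weaken_insert (hyp (.inl rfl))

end Derivable

/-! ### Solovay's shortening with atomic segments -/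

/-- `I(y) → I(y + 2 ^ x)` for the segment `I` coded by `S`, as an atom in the bound variable `y`. -/
def stepFm (S : Tm → Tm) (x : Tm) : Fm :=
  holds (impCode (S (.bvar 0)) (S (addTwoPow (.bvar 0) (liftT 0 x))))

/-- The value of `y` at which `I(y) → I(y + 2 ^ x)` fails, if there is one. -/
def stepWitness (S : Tm → Tm) (x : Tm) : Tm :=
  .eps (.not (stepFm S x))

/-- The code of `x ∈ I j`, where `I 0` is the segment of small numbers and `x ∈ I (j + 1)` means
`∀ y, I j y → I j (y + 2 ^ x)`; the quantifier is expressed by an epsilon term. -/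
def seg : ℕ → Tm → Tm
  | 0, x => x
  | j + 1, x =>
    let w := stepWitness (seg j) x
    impCode (seg j w) (seg j (addTwoPow w x))

theorem subT_seg (j k : ℕ) (u x : Tm) : subT k u (seg j x) = seg j (subT k u x) := by
  induction j generalizing k u x with
  | zero => rfl
  | succ j ih =>
    simp [seg, stepWitness, stepFm, subT, subTs, subF, ih, subT_liftT]

theorem inst0_stepFm_seg (j : ℕ) (x y : Tm) :
    inst0 (stepFm (seg j) x) y = holds (impCode (seg j y) (seg j (addTwoPow y x))) := by
  simp [stepFm, inst0, subF, subT, subTs, subT_seg, subT_liftT_self]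

theorem holds_seg_succ (j : ℕ) (x : Tm) :
    holds (seg (j + 1) x) = inst0 (stepFm (seg j) x) (stepWitness (seg j) x) :=
  (inst0_stepFm_seg j x _).symm

namespace Derivable

variable {n m j : ℕ} {T : Set Fm} [ExtendsPowTheory T] {a b x y : Tm}

theorem holds_seg_inst (y : Tm) (hx : Derivable n T (holds (seg (j + 1) x))) :
    Derivable (n + 4) T (holds (impCode (seg j y) (seg j (addTwoPow y x)))) :=
  hx.holds_cut <| allL y (.inl (holds_seg_succ j x).symm) <|
    hyp <| .inl (inst0_stepFm_seg j x y).symm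

theorem holds_seg_elim (hx : Derivable n T (holds (seg (j + 1) x)))
    (hy : Derivable m T (holds (seg j y))) :
    Derivable (n + m + 9) T (holds (seg j (addTwoPow y x))) :=
  ((hx.holds_seg_inst y).holds_mp hy).mono (by omega)

theorem holds_seg_intro
    (h : ∀ y, Derivable n (insert (holds (seg j y)) T) (holds (seg j (addTwoPow y x)))) :
    Derivable (n + 5) T (holds (seg (j + 1) x)) :=
  (h (stepWitness (seg j) x)).holds_impCode

theorem holds_seg_congr (hab : Derivable n T (.eq a b)) (ha : Derivable m T (holds (seg j a))) :
    Derivable (n + m + 20 * j + 5) T (holds (seg j b)) := by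
  induction j generalizing n m T a b with
  | zero => exact hab.holds_congr ha
  | succ j ih =>
    refine (holds_seg_intro (n := n + m + 20 * j + 20) fun y ↦ ?_).mono (by omega)
    have hy : holds (seg j y) ∈ insert (holds (seg j y)) T := Set.mem_insert _ _
    have hya := ha.weaken_insert.holds_seg_elim (hyp hy)
    exact (ih (hab.weaken_insert.eq_addTwoPow_congr y) hya).mono (by omega)

theorem holds_seg_tmSucc (hx : holds (seg j x) ∈ T) :
    Derivable (20 * j + 14) T (holds (seg j (succ x))) := by
  cases j with
  | zero => exact (hyp hx).holds_succ.mono (by omega)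
  | succ j =>
    refine (holds_seg_intro (n := 20 * j + 29) fun y ↦ ?_).mono (by omega)
    have hy : holds (seg j y) ∈ insert (holds (seg j y)) T := Set.mem_insert _ _
    have hx' := hyp (Set.mem_insert_of_mem (holds (seg j y)) hx)
    have hyx := hx'.holds_seg_elim (hx'.holds_seg_elim (hyp hy))
    exact (holds_seg_congr (eq_addTwoPow_succ y x) hyx).mono (by omega)

theorem holds_seg_zero (j : ℕ) : Derivable (40 * j + 1) T (holds (seg j zero)) := by
  cases j with
  | zero => exact holds_zero
  | succ j =>
    refine (holds_seg_intro (n := 40 * j + 21) fun y ↦ ?_).mono (by omega)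
    have hy : holds (seg j y) ∈ insert (holds (seg j y)) T := Set.mem_insert _ _
    exact (holds_seg_congr (eq_addTwoPow_zero y) (holds_seg_tmSucc hy)).mono (by omega)

end Derivable

/-- The term `0 + 2 ^ (0 + 2 ^ ⋯)` for the number `iterExp k 0`. -/
def Tm.tower : ℕ → Tm
  | 0 => zero
  | k + 1 => addTwoPow zero (tower k)

theorem Derivable.holds_seg_tower (k j : ℕ) {T : Set Fm} [ExtendsPowTheory T] :
    Derivable ((k + 1) * (40 * (j + k) + 10)) T (holds (seg j (tower k))) := by
  induction k generalizing j with
  | zero => exact (holds_seg_zero j).mono (by omega)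
  | succ k ih => exact ((ih (j + 1)).holds_seg_elim (holds_seg_zero j)).mono (by lia)

theorem exists_eDeriv_holds_tower (i : ℕ) :
    ∃ e : EDeriv (powTheory.map epsT) [holds (tower i)],
      e.cutFms = [] ∧ e.size ≤ 5 * ((i + 1) * (40 * i + 10)) + 10 := by
  let T : Set Fm := {A | A ∈ powTheory.map epsT}
  have : ExtendsPowTheory T := ⟨fun _ ↦ List.mem_map_of_mem⟩
  have h : Derivable _ T (holds (tower i)) := .holds_seg_tower i 0
  obtain ⟨e, hcut, hsize⟩ := h.exists_eDeriv
  exact ⟨e, hcut, by simpa [powTheory] using hsize⟩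

/-! ### Relativized models -/

/-- An interpretation of the terms in `V`. The epsilon terms in a first-order derivation act as
constants, so they all share one value. -/
structure TermModel (V : Type*) where
  func : ℕ → List V → V
  fvar : ℕ → V
  eps : V

/-- A model whose quantifiers range over the subset `dom` only, which need not be closed under the
functions. -/
structure Model (V : Type*) extends TermModel V where
  atom : ℕ → List V → Prop
  dom : Set V

/-- The assignment `ρ` of the bound variables, with `v` inserted at index `k`. -/
def insertAt {V : Type*} (k : ℕ) (v : V) (ρ : ℕ → V) (n : ℕ) : V :=
  if n < k then ρ n else if n = k then v else ρ (n - 1)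

theorem insertAt_succ_insertAt_zero {V : Type*} (k : ℕ) (v w : V) (ρ : ℕ → V) :
    insertAt (k + 1) w (insertAt 0 v ρ) = insertAt 0 v (insertAt k w ρ) := by
  funext n
  grind [insertAt]

namespace TermModel

variable {V : Type*} (M : TermModel V)

mutual

/-- The value of a term under the assignment `ρ` of its bound variables. -/
def eval (ρ : ℕ → V) : Tm → V
  | .bvar n => ρ n
  | .fvar a => M.fvar a
  | .func f ts => M.func f (evals ρ ts)
  | .eps _ => M.eps

/-- The values of a list of terms. -/
def evals (ρ : ℕ → V) : Tms → List V
  | .nil => []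
  | .cons t ts => eval ρ t :: evals ρ ts

end

mutual

theorem eval_liftT (v : V) (ρ : ℕ → V) (t : Tm) :
    M.eval (insertAt 0 v ρ) (liftT 0 t) = M.eval ρ t := by
  cases t with
  | bvar n | fvar a | eps A => simp [liftT, eval, insertAt]
  | func f ts => simp only [liftT, eval, evals_liftTs v ρ ts]

theorem evals_liftTs (v : V) (ρ : ℕ → V) (ts : Tms) :
    M.evals (insertAt 0 v ρ) (liftTs 0 ts) = M.evals ρ ts := by
  cases ts with
  | nil => rfl
  | cons t ts => simp only [liftTs, evals, eval_liftT v ρ t, evals_liftTs v ρ ts]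

end

mutual

theorem eval_subT (k : ℕ) (u : Tm) (ρ : ℕ → V) (t : Tm) :
    M.eval ρ (subT k u t) = M.eval (insertAt k (M.eval ρ u) ρ) t := by
  cases t with
  | bvar n => grind [subT, eval, insertAt]
  | fvar a | eps A => rfl
  | func f ts => simp only [subT, eval, evals_subTs k u ρ ts]

theorem evals_subTs (k : ℕ) (u : Tm) (ρ : ℕ → V) (ts : Tms) :
    M.evals ρ (subTs k u ts) = M.evals (insertAt k (M.eval ρ u) ρ) ts := by
  cases ts with
  | nil => rfl
  | cons t ts => simp only [subTs, evals, eval_subT k u ρ t, evals_subTs k u ρ ts]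

end

end TermModel

namespace Model

variable {V : Type*} (M : Model V)

/-- Truth of a formula under the assignment `ρ` of its bound variables. -/
def Sat (ρ : ℕ → V) : Fm → Prop
  | .atom p ts => M.atom p (M.evals ρ ts)
  | .and A B => Sat ρ A ∧ Sat ρ B
  | .or A B => Sat ρ A ∨ Sat ρ B
  | .imp A B => Sat ρ A → Sat ρ B
  | .not A => ¬ Sat ρ A
  | .all A => ∀ v ∈ M.dom, Sat (insertAt 0 v ρ) A
  | .ex A => ∃ v ∈ M.dom, Sat (insertAt 0 v ρ) A

theorem sat_subF (k : ℕ) (u : Tm) (ρ : ℕ → V) (A : Fm) :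
    M.Sat ρ (subF k u A) ↔ M.Sat (insertAt k (M.eval ρ u) ρ) A := by
  cases A with
  | atom p ts => simp only [subF, Sat, M.evals_subTs]
  | and A B | or A B | imp A B => simp only [subF, Sat, sat_subF k u ρ A, sat_subF k u ρ B]
  | not A => simp only [subF, Sat, sat_subF k u ρ A]
  | all A | ex A =>
    simp only [subF, Sat, sat_subF (k + 1) (liftT 0 u) _ A, M.eval_liftT,
      insertAt_succ_insertAt_zero]

theorem sat_inst0 (ρ : ℕ → V) (A : Fm) (t : Tm) :
    M.Sat ρ (inst0 A t) ↔ M.Sat (insertAt 0 (M.eval ρ t) ρ) A :=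
  M.sat_subF 0 t ρ A

end Model

theorem posW_subF_and_negW_subF (k : ℕ) (u : Tm) (A : Fm) :
    posW (subF k u A) = posW A ∧ negW (subF k u A) = negW A := by
  induction A using Fm.rec (motive_1 := fun _ ↦ True) (motive_2 := fun _ ↦ True)
    generalizing k u <;> simp_all [subF, posW, negW]

namespace Deriv

/-- The terms instantiated by the weak quantifier inferences of a derivation. -/
def weakTms : ∀ {Γ Δ}, Deriv Γ Δ → List Tm
  | _, _, ax _ => []
  | _, _, andL _ _ _ _ d => d.weakTms
  | _, _, andR _ _ _ _ _ _ d e => d.weakTms ++ e.weakTms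
  | _, _, orL _ _ _ _ _ _ d e => d.weakTms ++ e.weakTms
  | _, _, orR _ _ _ _ d => d.weakTms
  | _, _, impL _ _ _ _ _ _ d e => d.weakTms ++ e.weakTms
  | _, _, impR _ _ _ _ d => d.weakTms
  | _, _, notL _ _ _ d => d.weakTms
  | _, _, notR _ _ _ d => d.weakTms
  | _, _, wL _ _ _ d => d.weakTms
  | _, _, wR _ _ _ d => d.weakTms
  | _, _, cL _ _ _ d => d.weakTms
  | _, _, cR _ _ _ d => d.weakTms
  | _, _, cut _ _ _ _ _ d e => d.weakTms ++ e.weakTms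
  | _, _, allL t _ _ _ d => t :: d.weakTms
  | _, _, allR _ _ _ _ d => d.weakTms
  | _, _, exL _ _ _ _ d => d.weakTms
  | _, _, exR t _ _ _ d => t :: d.weakTms
  | _, _, permL _ _ _ _ d => d.weakTms
  | _, _, permR _ _ _ _ d => d.weakTms

theorem length_weakTms_le {Γ Δ : List Fm} (d : Deriv Γ Δ) : d.weakTms.length ≤ d.size := by
  induction d <;> simp only [weakTms, size, List.length_append, List.length_cons,
    List.length_nil] <;> omega

-- Without cuts, weakness passes from the conclusion of an inference to its premises.
theorem strongs_eq_nil {Γ Δ : List Fm} (d : Deriv Γ Δ) (hcut : d.cutFms = [])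
    (hweak : WeakSeq Γ Δ) : d.strongs = [] := by
  induction d with
  | permL Γ Γ' Δ h d ih => exact ih hcut ⟨fun A hA ↦ hweak.1 A (h.mem_iff.mp hA), hweak.2⟩
  | permR Γ Δ Δ' h d ih => exact ih hcut ⟨hweak.1, fun A hA ↦ hweak.2 A (h.mem_iff.mp hA)⟩
  | _ =>
    simp_all only [cutFms, strongs, WeakSeq, posW, negW, inst0, posW_subF_and_negW_subF,
      List.forall_mem_cons, List.forall_mem_append, List.append_eq_nil_iff, Bool.and_eq_true,
      and_self, implies_true, reduceCtorEq, Bool.false_eq_true, false_and, and_false]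

theorem sound {V : Type*} (M : Model V) (ρ : ℕ → V) {Γ Δ : List Fm} (d : Deriv Γ Δ)
    (hstrongs : d.strongs = []) (hdom : ∀ t ∈ d.weakTms, M.eval ρ t ∈ M.dom)
    (hΓ : ∀ A ∈ Γ, M.Sat ρ A) : ∃ A ∈ Δ, M.Sat ρ A := by
  by_contra! hΔ
  induction d with
  | permL Γ Γ' Δ h d ih => exact ih hstrongs hdom (fun A hA ↦ hΓ A (h.mem_iff.mp hA)) hΔ
  | permR Γ Δ Δ' h d ih => exact ih hstrongs hdom hΓ fun A hA ↦ hΔ A (h.mem_iff.mp hA)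
  | _ =>
    simp only [weakTms, strongs, List.forall_mem_cons, List.forall_mem_append, Model.Sat,
      List.append_eq_nil_iff, Model.sat_inst0, reduceCtorEq] at * <;>
    grind

end Deriv

/-! ### The lower bound for first-order derivations -/

/-- The values of the terms over the signature of `powTheory`: numbers and implications. -/
inductive Val where
  | nat : ℕ → Val
  | imp : Val → Val → Val

namespace Val

/-- Addition of `n`, which leaves implications unchanged. -/
def addNat (n : ℕ) : Val → Val
  | nat m => nat (m + n)
  | imp p q => imp p q

/-- The power `2 ^ x`. Its value `0` at implications makes `y + 2 ^ x + 2 ^ x = y + 2 ^ (x + 1)`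
hold there. -/
def twoPow : Val → ℕ
  | nat m => 2 ^ m
  | imp _ _ => 0

/-- Truth of implications when precisely the numbers below `m` count as true. -/
def Holds (m : ℕ) : Val → Prop
  | nat x => x < m
  | imp p q => p.Holds m → q.Holds m

@[simp]
theorem addNat_nat (n m : ℕ) : (nat m).addNat n = nat (m + n) := rfl

@[simp]
theorem twoPow_nat (m : ℕ) : (nat m).twoPow = 2 ^ m := rfl

theorem addNat_twoPow_twice (y x : Val) :
    (y.addNat x.twoPow).addNat x.twoPow = y.addNat (x.addNat 1).twoPow := by
  cases y <;> cases x <;> simp only [addNat, twoPow, pow_succ, mul_two, add_assoc, add_zero]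

theorem Holds.addNat_one {n : ℕ} {x : Val} (hx : x.Holds (n + 1)) (hne : x ≠ nat n) :
    (x.addNat 1).Holds (n + 1) := by
  cases x with
  | nat m => grind [Holds, addNat]
  | imp p q => exact hx

end Val

/-- The standard interpretation of the terms over the signature of `powTheory`. -/
def valTerms : TermModel Val where
  func
    | 1, [x] => x.addNat 1
    | 2, [y, x] => y.addNat x.twoPow
    | 3, [p, q] => .imp p q
    | _, _ => .nat 0
  fvar _ := .nat 0
  eps := .nat 0

/-- The numbers up to `n` are small, but quantifiers do not range over `n`. Thus small numbers
appear to be closed under successor. -/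
def segModel (n : ℕ) : Model Val where
  toTermModel := valTerms
  atom
    | 0, [x] => x.Holds (n + 1)
    | 1, [x, y] => x = y
    | _, _ => True
  dom := {v | v ≠ .nat n}

theorem segModel_sat_powTheory (n : ℕ) (ρ : ℕ → Val) :
    ∀ A ∈ powTheory, (segModel n).Sat ρ A := by
  simp only [powTheory, List.forall_mem_cons, Model.Sat, TermModel.evals, TermModel.eval,
    segModel, valTerms, insertAt]
  simp +contextual [Val.Holds, Val.addNat_twoPow_twice, Val.Holds.addNat_one]

theorem eval_tower (ρ : ℕ → Val) (i : ℕ) : valTerms.eval ρ (tower i) = .nat (iterExp i 0) := by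
  induction i with
  | zero => rfl
  | succ i ih =>
    change (Val.nat 0).addNat (valTerms.eval ρ (tower i)).twoPow = _
    simp [ih, iterExp]

theorem weakSeq_tower (i : ℕ) : WeakSeq powTheory [holds (tower i)] :=
  ⟨by simp [powTheory, negW, posW], by simp [posW]⟩

theorem exists_weakTms_eval_eq {i n : ℕ} (d : Deriv powTheory [holds (tower i)])
    (hcut : d.cutFms = []) (hn : n < iterExp i 0) (ρ : ℕ → Val) :
    ∃ t ∈ d.weakTms, valTerms.eval ρ t = .nat n := by
  by_contra! hdom
  obtain ⟨A, hA, hsat⟩ := d.sound (segModel n) ρ (d.strongs_eq_nil hcut (weakSeq_tower i)) hdom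
    (segModel_sat_powTheory n ρ)
  obtain rfl := List.mem_singleton.mp hA
  have hlt : (valTerms.eval ρ (tower i)).Holds (n + 1) := hsat
  rw [eval_tower] at hlt
  exact absurd hlt (by simpa [Val.Holds] using hn)

theorem iterExp_zero_le_size {i : ℕ} (d : Deriv powTheory [holds (tower i)])
    (hcut : d.cutFms = []) : iterExp i 0 ≤ d.size := by
  let ρ : ℕ → Val := fun _ ↦ .nat 0
  have hsub : (List.range (iterExp i 0)).map .nat ⊆ d.weakTms.map (valTerms.eval ρ) := by
    simpa [List.subset_def] using fun n hn ↦ exists_weakTms_eval_eq d hcut hn ρ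
  have hnodup : ((List.range (iterExp i 0)).map Val.nat).Nodup :=
    List.nodup_range.map fun _ _ ↦ Val.nat.inj
  have hlen := (List.subperm_of_subset hnodup hsub).length_le
  rw [List.length_map, List.length_range, List.length_map] at hlen
  exact hlen.trans d.length_weakTms_le

/-! ### Growth of the tower -/

theorem iterExp_add (k l n : ℕ) : iterExp (k + l) n = iterExp k (iterExp l n) := by
  induction k with
  | zero => simp [iterExp]
  | succ k ih => rw [Nat.add_right_comm, iterExp, iterExp, ih]

theorem strictMono_iterExp (k : ℕ) : StrictMono (iterExp k) := by
  induction k with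
  | zero => exact strictMono_id
  | succ k ih => exact fun m n h ↦ Nat.pow_lt_pow_right one_lt_two (ih h)

theorem exists_add_lt_iterExp_zero (k : ℕ) : ∃ m, k + m < iterExp m 0 := by
  induction k with
  | zero => exact ⟨3, by decide⟩
  | succ k ih =>
    obtain ⟨m, hm⟩ := ih
    have hm0 : m ≠ 0 := by
      rintro rfl
      simp [iterExp] at hm
    refine ⟨m + 1, ?_⟩
    calc
      k + 1 + (m + 1) < 2 * (k + m + 1) := by omega
      _ ≤ 2 * 2 ^ (k + m) := by
        gcongr
        exact Nat.lt_two_pow_self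
      _ = 2 ^ (k + m + 1) := (pow_succ' 2 (k + m)).symm
      _ ≤ 2 ^ iterExp m 0 := Nat.pow_le_pow_right two_pos hm

theorem IsElementary.exists_lt_iterExp_zero {f : ℕ → ℕ} (hf : IsElementary f) :
    ∃ i, f i < iterExp i 0 := by
  obtain ⟨k, hk⟩ := hf
  obtain ⟨m, hm⟩ := exists_add_lt_iterExp_zero k
  refine ⟨k + m, (hk _).trans_lt ?_⟩
  rw [iterExp_add]
  exact strictMono_iterExp k hm

theorem not_forall_exists_deriv_tower {f : ℕ → ℕ} (hf : IsElementary f) :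
    ¬ ∀ i, ∃ d : Deriv powTheory [holds (tower i)], d.cutFms = [] ∧ d.size ≤ f i := by
  obtain ⟨i, hi⟩ := hf.exists_lt_iterExp_zero
  intro h
  obtain ⟨d, hcut, hsize⟩ := h i
  exact absurd (iterExp_zero_le_size d hcut) (hsize.trans_lt hi).not_ge

/-! ### Language and size of the tower sequents -/

theorem noEpsT_tower (i : ℕ) : noEpsT (tower i) = true := by
  induction i with
  | zero => rfl
  | succ i ih => simp [tower, noEpsT, noEpsTs, ih]

theorem foSeq_tower (i : ℕ) : FOSeq powTheory [holds (tower i)] :=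
  ⟨by simp [powTheory, isFO, noEpsF, noEpsT, noEpsTs],
    by simp [isFO, noEpsF, noEpsTs, noEpsT_tower]⟩

theorem szT_tower (i : ℕ) : szT (tower i) = 2 * i + 1 := by
  induction i with
  | zero => rfl
  | succ i ih =>
    simp only [tower, szT, szTs, ih]
    omega

theorem seqSize_eq_sum (Γ Δ : List Fm) : seqSize Γ Δ = ((Γ ++ Δ).map szF).sum := by
  rw [seqSize, List.sum, List.foldr_map]

theorem seqSize_tower (Γ : List Fm) (i : ℕ) :
    seqSize Γ [holds (tower i)] = seqSize Γ [] + (2 * i + 2) := by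
  simp [seqSize_eq_sum, szF, szTs, szT_tower]
  omega

/-- There is a sequence of cut-free Lε-proofs of end-sequents
`S i` such that: (1) the size of `S i` is polynomial in `i`; (2) each `S i` is
the epsilon translation of a first-order sequent `S' i` with weak quantifiers
only; (3) the size of these cut-free Lε-proofs is polynomially bounded in `i`;
(4) no elementary function of `i` bounds the size of the smallest cut-free
LK⁺-proofs, nor of the smallest cut-free LK⁺⁺-proofs, of `S' i`.  Hence
cut-free Lε-proofs give a non-elementary speed-up even over cut-free LK⁺- and
LK⁺⁺-proofs. -/
theorem leps_speedup_over_lkplus :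
    ∃ S' : ℕ → List Fm × List Fm,
      -- (2) S_i is the epsilon translation of the first-order sequent S'_i,
      -- which contains weak quantifiers only
      (∀ i, FOSeq (S' i).1 (S' i).2 ∧ WeakSeq (S' i).1 (S' i).2) ∧
      -- (1) the size of S_i = [S'_i]^ε is polynomial in i
      (∃ p : Polynomial ℕ,
        ∀ i, seqSize ((S' i).1.map epsT) ((S' i).2.map epsT) ≤ p.eval i) ∧
      -- (3) cut-free Lε-proofs of S_i of polynomial size
      (∃ q : Polynomial ℕ,
        ∀ i, ∃ e : EDeriv ((S' i).1.map epsT) ((S' i).2.map epsT),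
          e.cutFms = [] ∧ e.size ≤ q.eval i) ∧
      -- (4) no elementary bound on cut-free LK⁺-proofs of S'_i ...
      (∀ f : ℕ → ℕ, IsElementary f →
        ¬ ∀ i, ∃ d : Deriv (S' i).1 (S' i).2,
            SuitP d ∧ d.cutFms = [] ∧ d.size ≤ f i) ∧
      -- ... nor on cut-free LK⁺⁺-proofs of S'_i
      (∀ f : ℕ → ℕ, IsElementary f →
        ¬ ∀ i, ∃ d : Deriv (S' i).1 (S' i).2,
            SuitPP d ∧ d.cutFms = [] ∧ d.size ≤ f i) := by
  refine ⟨fun i ↦ (powTheory, [holds (tower i)]), fun i ↦ ⟨foSeq_tower i, weakSeq_tower i⟩,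
    ⟨.C (seqSize (powTheory.map epsT) [] + 2) + 2 * .X, fun i ↦ ?_⟩,
    ⟨5 * ((.X + 1) * (40 * .X + 10)) + 10, fun i ↦ ?_⟩,
    fun f hf h ↦ not_forall_exists_deriv_tower hf fun i ↦ (h i).imp fun _ hd ↦ hd.2,
    fun f hf h ↦ not_forall_exists_deriv_tower hf fun i ↦ (h i).imp fun _ hd ↦ hd.2⟩
  · refine (seqSize_tower (powTheory.map epsT) i).trans_le ?_
    simp only [Polynomial.eval_add, Polynomial.eval_C, Polynomial.eval_mul, Polynomial.eval_X,
      Polynomial.eval_ofNat]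
    omega
  · exact (exists_eDeriv_holds_tower i).imp fun _ he ↦ ⟨he.1, he.2.trans_eq (by simp)⟩

end EpsCalc
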